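/- The sets F_n = {s^k t^l u^m : k, l, m ∈ ℤ, −√(n/2) < k ≤ √(n/2), −√(n/2) < l ≤ √(n/2), −n/2 < m ≤ n/2} form a Følner sequence for the integer Heisenberg group H: each F_n is finite and nonempty, every element of H lies in F_n for all sufficiently large n, and |F_n Δ F_n g| / |F_n| → 0 as n → ∞ for every g ∈ H, where Δ denotes symmetric difference. -/

import Mathlib

/-!
Right multiplication is almost a translation in the coordinates of the normal form
`s ^ k * t ^ l * u ^ m`: by `nf_mul`,
`(k, l, m) * (a, b, c) = (k + a, l + b, m + (c - a * l))`.
The normal form is unique, and `F n` is the image of a box `I × I × J` of integer points, where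
`I` has about `2r` elements, `J` about `2r²`, and `r = √(n/2)`. A point of the box which is moved
out of it must have its first or second coordinate within `|a|` or `|b|` of an end of `I`, or its
third coordinate within `|c| + |a| r` of an end of `J`, since `|l| ≤ r`. There are at most
`2 (|a| + |b|) |I| |J| + 2 (|c| + |a| r) |I|²` such points (`card_moved_le`), a proportion `O(1/r)`
of the box, because the shear term `|a| r` is compared with the length `2r²` of `J`. Right
translation preserves cardinality, so the symmetric difference has at most twice as many elements.
-/

set_option linter.unnecessarySeqFocus false

/-- A 3×3 integer matrix is upper unitriangular. -/
def IsUnitriangular (M : Matrix (Fin 3) (Fin 3) ℤ) : Prop :=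
  M 0 0 = 1 ∧ M 1 1 = 1 ∧ M 2 2 = 1 ∧ M 1 0 = 0 ∧ M 2 0 = 0 ∧ M 2 1 = 0

/-- The integer Heisenberg group: 3×3 upper unitriangular integer matrices under matrix
multiplication. -/
def Heisenberg : Type := {M : Matrix (Fin 3) (Fin 3) ℤ // IsUnitriangular M}

namespace Heisenberg

instance : Group Heisenberg where
  mul A B := ⟨A.1 * B.1, by
    obtain ⟨a1, a2, a3, a4, a5, a6⟩ := A.2
    obtain ⟨b1, b2, b3, b4, b5, b6⟩ := B.2
    refine ⟨?_, ?_, ?_, ?_, ?_, ?_⟩ <;>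
      simp [Matrix.mul_apply, Fin.sum_univ_three, a1, a2, a3, a4, a5, a6,
        b1, b2, b3, b4, b5, b6]⟩
  one := ⟨1, by refine ⟨?_, ?_, ?_, ?_, ?_, ?_⟩ <;> simp [Matrix.one_apply]⟩
  inv A := ⟨!![1, -(A.1 0 1), A.1 0 1 * A.1 1 2 - A.1 0 2;
               0, 1, -(A.1 1 2);
               0, 0, 1], by
    refine ⟨?_, ?_, ?_, ?_, ?_, ?_⟩ <;> rfl⟩
  mul_assoc A B C := Subtype.ext (Matrix.mul_assoc A.1 B.1 C.1)
  one_mul A := Subtype.ext (Matrix.one_mul A.1)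
  mul_one A := Subtype.ext (Matrix.mul_one A.1)
  inv_mul_cancel A := by
    obtain ⟨M, a1, a2, a3, a4, a5, a6⟩ := A
    apply Subtype.ext
    show _ * M = (1 : Matrix (Fin 3) (Fin 3) ℤ)
    ext i j
    fin_cases i <;> fin_cases j <;>
      simp [Matrix.mul_apply, Fin.sum_univ_three, Matrix.one_apply,
        a1, a2, a3, a4, a5, a6] <;> ring

/-- The generator `s` of the integer Heisenberg group. -/
def s : Heisenberg :=
  ⟨!![1, 1, 0; 0, 1, 0; 0, 0, 1], by refine ⟨?_, ?_, ?_, ?_, ?_, ?_⟩ <;> rfl⟩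

/-- The generator `t` of the integer Heisenberg group. -/
def t : Heisenberg :=
  ⟨!![1, 0, 0; 0, 1, 1; 0, 0, 1], by refine ⟨?_, ?_, ?_, ?_, ?_, ?_⟩ <;> rfl⟩

/-- The element `u = [s,t] = s⁻¹t⁻¹st` of the integer Heisenberg group. -/
def u : Heisenberg :=
  ⟨!![1, 0, 1; 0, 1, 0; 0, 0, 1], by refine ⟨?_, ?_, ?_, ?_, ?_, ?_⟩ <;> rfl⟩

end Heisenberg

open Filter
open scoped symmDiff Classical

/-! ### Normal form and the multiplication law -/

namespace Heisenberg

/-- The upper unitriangular matrix with entries `k`, `l` above the diagonal and corner `z`. -/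
def mat (k l z : ℤ) : Heisenberg :=
  ⟨!![1, k, z; 0, 1, l; 0, 0, 1], by refine ⟨?_, ?_, ?_, ?_, ?_, ?_⟩ <;> rfl⟩

lemma mat_mul (k l z a b c : ℤ) :
    mat k l z * mat a b c = mat (k + a) (l + b) (z + c + k * b) := by
  apply Subtype.ext
  change (mat k l z).1 * (mat a b c).1 = _
  ext i j
  fin_cases i <;> fin_cases j <;>
    simp [mat, Matrix.mul_apply, Fin.sum_univ_three] <;> ring

lemma mat_one : mat 0 0 0 = 1 := by
  apply Subtype.ext
  change _ = (1 : Matrix (Fin 3) (Fin 3) ℤ)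
  ext i j
  fin_cases i <;> fin_cases j <;> simp [mat]

lemma exists_mat (g : Heisenberg) : ∃ k l z, g = mat k l z := by
  obtain ⟨M, a1, a2, a3, a4, a5, a6⟩ := g
  refine ⟨M 0 1, M 1 2, M 0 2, Subtype.ext ?_⟩
  change M = _
  ext i j
  fin_cases i <;> fin_cases j <;> simp [mat, a1, a2, a3, a4, a5, a6]

lemma mat_inj {k l z a b c : ℤ} (h : mat k l z = mat a b c) : k = a ∧ l = b ∧ z = c := by
  have h' := congrArg Subtype.val h
  exact ⟨congrFun (congrFun h' 0) 1, congrFun (congrFun h' 1) 2, congrFun (congrFun h' 0) 2⟩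

/-- An additive one-parameter family is given by the powers of its value at `1`. -/
lemma zpow_eq (f : ℤ → Heisenberg) (h0 : f 0 = 1) (hadd : ∀ x y, f (x + y) = f x * f y) (k : ℤ) :
    f 1 ^ k = f k := by
  let φ : Multiplicative ℤ →* Heisenberg :=
    { toFun := fun x => f x.toAdd
      map_one' := h0
      map_mul' := fun x y => hadd _ _ }
  have h := map_zpow φ (Multiplicative.ofAdd 1) k
  rw [← ofAdd_zsmul, smul_eq_mul, mul_one] at h
  exact h.symm

lemma s_zpow (k : ℤ) : s ^ k = mat k 0 0 :=
  zpow_eq (fun k => mat k 0 0) mat_one (fun x y => by simp [mat_mul]) k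

lemma t_zpow (k : ℤ) : t ^ k = mat 0 k 0 :=
  zpow_eq (fun k => mat 0 k 0) mat_one (fun x y => by simp [mat_mul]) k

lemma u_zpow (k : ℤ) : u ^ k = mat 0 0 k :=
  zpow_eq (fun k => mat 0 0 k) mat_one (fun x y => by simp [mat_mul]) k

/-- The normal form `s ^ k * t ^ l * u ^ m` attached to the coordinates `(k, l, m)`. -/
def nf (x : ℤ × ℤ × ℤ) : Heisenberg := s ^ x.1 * t ^ x.2.1 * u ^ x.2.2

lemma nf_eq_mat (x : ℤ × ℤ × ℤ) : nf x = mat x.1 x.2.1 (x.1 * x.2.1 + x.2.2) := by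
  simp [nf, s_zpow, t_zpow, u_zpow, mat_mul]

lemma nf_injective : Function.Injective nf := by
  rintro ⟨k, l, m⟩ ⟨a, b, c⟩ h
  rw [nf_eq_mat, nf_eq_mat] at h
  obtain ⟨h1, h2, h3⟩ := mat_inj h
  dsimp only at h1 h2 h3
  subst h1 h2
  simp_all

lemma nf_surjective (g : Heisenberg) : ∃ x, g = nf x := by
  obtain ⟨k, l, z, rfl⟩ := exists_mat g
  exact ⟨(k, l, z - k * l), by simp [nf_eq_mat]⟩

/-- The map of coordinates induced by right multiplication by `nf (a, b, c)`. -/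
def shift (a b c : ℤ) (x : ℤ × ℤ × ℤ) : ℤ × ℤ × ℤ :=
  (x.1 + a, x.2.1 + b, x.2.2 + (c - a * x.2.1))

lemma nf_mul (a b c : ℤ) (x : ℤ × ℤ × ℤ) : nf x * nf (a, b, c) = nf (shift a b c x) := by
  simp only [nf_eq_mat, mat_mul, shift]
  congr 1
  ring

/-! ### Points moved out of a box -/

/-- The integer points of `(p, q]` within distance `D` of an end, with further points outside
the interval when it is shorter than `D`. -/
noncomputable def edge (p q : ℤ) (D : ℕ) : Finset ℤ := Finset.Ioc p (p + D) ∪ Finset.Ioc (q - D) q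

lemma card_edge_le (p q : ℤ) (D : ℕ) : (edge p q D).card ≤ 2 * D := by
  refine (Finset.card_union_le _ _).trans ?_
  simp only [Int.card_Ioc]
  omega

lemma mem_edge {p q x d : ℤ} {D : ℕ} (hx : x ∈ Finset.Ioc p q) (hd : d.natAbs ≤ D)
    (h : x + d ∉ Finset.Ioc p q) : x ∈ edge p q D := by
  simp only [edge, Finset.mem_union, Finset.mem_Ioc] at *
  omega

/-- The box of coordinates `(p, q] × (p, q] × (v, w]`. -/
noncomputable def box (p q v w : ℤ) : Finset (ℤ × ℤ × ℤ) :=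
  Finset.Ioc p q ×ˢ Finset.Ioc p q ×ˢ Finset.Ioc v w

/-- Only points near a face of the box are moved out of it by `shift a b c`. The bound `R` on the
second coordinate controls the size of the shear. -/
lemma card_moved_le (p q v w a b c : ℤ) (R : ℕ) (hR : ∀ l ∈ Finset.Ioc p q, l.natAbs ≤ R) :
    ((box p q v w).filter (fun x => shift a b c x ∉ box p q v w)).card ≤
      2 * a.natAbs * ((Finset.Ioc p q).card * (Finset.Ioc v w).card) +
      2 * b.natAbs * ((Finset.Ioc p q).card * (Finset.Ioc v w).card) +
      2 * (c.natAbs + a.natAbs * R) * ((Finset.Ioc p q).card * (Finset.Ioc p q).card) := by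
  have hsub : (box p q v w).filter (fun x => shift a b c x ∉ box p q v w) ⊆
      (edge p q a.natAbs ×ˢ Finset.Ioc p q ×ˢ Finset.Ioc v w) ∪
      (Finset.Ioc p q ×ˢ edge p q b.natAbs ×ˢ Finset.Ioc v w) ∪
      (Finset.Ioc p q ×ˢ Finset.Ioc p q ×ˢ edge v w (c.natAbs + a.natAbs * R)) := by
    rintro ⟨k, l, m⟩ hx
    simp only [Finset.mem_filter, box, shift, Finset.mem_product] at hx
    obtain ⟨⟨hk, hl, hm⟩, hout⟩ := hx
    have hd : (c - a * l).natAbs ≤ c.natAbs + a.natAbs * R :=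
      (Int.natAbs_sub_le _ _).trans (by
        rw [Int.natAbs_mul]
        exact Nat.add_le_add_left (Nat.mul_le_mul_left _ (hR l hl)) _)
    simp only [Finset.mem_union, Finset.mem_product]
    by_cases h1 : k + a ∈ Finset.Ioc p q
    · by_cases h2 : l + b ∈ Finset.Ioc p q
      · exact Or.inr ⟨hk, hl, mem_edge hm hd fun h3 => hout ⟨h1, h2, h3⟩⟩
      · exact Or.inl (Or.inr ⟨hk, mem_edge hl le_rfl h2, hm⟩)
    · exact Or.inl (Or.inl ⟨mem_edge hk le_rfl h1, hl, hm⟩)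
  refine (Finset.card_le_card hsub).trans ((Finset.card_union_le _ _).trans
    (Nat.add_le_add ((Finset.card_union_le _ _).trans (Nat.add_le_add ?_ ?_)) ?_)) <;>
    simp only [Finset.card_product]
  · exact Nat.mul_le_mul_right _ (card_edge_le _ _ _)
  · rw [Nat.mul_left_comm]
    exact Nat.mul_le_mul_right _ (card_edge_le _ _ _)
  · rw [← Nat.mul_assoc, Nat.mul_comm]
    exact Nat.mul_le_mul_right _ (card_edge_le _ _ _)

end Heisenberg

open Heisenberg in
/-- The two halves of the symmetric difference have the same size, and the half outside the box
consists of the images of the points which are moved out. -/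
lemma card_symmDiff_le (p q v w a b c : ℤ) :
    (((box p q v w).image nf) ∆ (((box p q v w).image nf).image (· * nf (a, b, c)))).card ≤
      2 * ((box p q v w).filter (fun x => shift a b c x ∉ box p q v w)).card := by
  set A := (box p q v w).image nf
  set A' := A.image (· * nf (a, b, c))
  have hcard : A.card = A'.card :=
    (Finset.card_image_of_injective _ (mul_left_injective _)).symm
  have hle : (A' \ A).card ≤
      ((box p q v w).filter (fun x => shift a b c x ∉ box p q v w)).card := by
    refine (Finset.card_le_card ?_).trans
      (Finset.card_image_le (f := fun x => nf (shift a b c x)))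
    intro y hy
    obtain ⟨hy1, hy2⟩ := Finset.mem_sdiff.1 hy
    obtain ⟨z, hz, rfl⟩ := Finset.mem_image.1 hy1
    obtain ⟨x, hx, rfl⟩ := Finset.mem_image.1 hz
    rw [nf_mul] at hy2 ⊢
    exact Finset.mem_image.2 ⟨x, Finset.mem_filter.2
      ⟨hx, fun h => hy2 (Finset.mem_image_of_mem _ h)⟩, rfl⟩
  have hunion : (A ∆ A').card ≤ (A \ A').card + (A' \ A).card := Finset.card_union_le _ _
  have hcomm : (A \ A').card = (A' \ A).card := Finset.card_sdiff_comm hcard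
  omega

/-! ### The asymptotic estimate -/

lemma card_Ioc_floor_ge (r : ℝ) : 2 * r - 1 ≤ ((Finset.Ioc ⌊-r⌋ ⌊r⌋).card : ℝ) := by
  have h1 := Int.floor_le (-r)
  have h2 := Int.sub_one_lt_floor r
  have h3 : ((⌊r⌋ - ⌊-r⌋ : ℤ) : ℝ) ≤ ((⌊r⌋ - ⌊-r⌋).toNat : ℝ) := by
    exact_mod_cast Int.self_le_toNat _
  rw [Int.card_Ioc]
  push_cast at h3
  linarith

open Heisenberg in
/-- The proportion of the box with half-lengths `r`, `r`, `r ^ 2` affected by a right translation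
is `O(1 / r)`. -/
lemma ratio_le (r : ℝ) (hr : 1 ≤ r) (a b c : ℤ) (B : Finset (ℤ × ℤ × ℤ))
    (hB : B = box ⌊-r⌋ ⌊r⌋ ⌊-(r ^ 2)⌋ ⌊r ^ 2⌋) :
    (((B.image nf) ∆ ((B.image nf).image (· * nf (a, b, c)))).card : ℝ) / ((B.image nf).card : ℝ) ≤
      (4 * (2 * a.natAbs + b.natAbs + c.natAbs) : ℝ) / r := by
  have hR : ∀ l ∈ Finset.Ioc ⌊-r⌋ ⌊r⌋, l.natAbs ≤ ⌊r⌋₊ := by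
    intro l hl
    rw [Finset.mem_Ioc, Int.floor_lt, Int.le_floor] at hl
    apply Nat.le_floor
    rw [Nat.cast_natAbs, Int.cast_abs]
    exact abs_le.2 ⟨hl.1.le, hl.2⟩
  have hmain := (card_symmDiff_le ⌊-r⌋ ⌊r⌋ ⌊-(r ^ 2)⌋ ⌊r ^ 2⌋ a b c).trans
    (Nat.mul_le_mul_left 2 (card_moved_le ⌊-r⌋ ⌊r⌋ ⌊-(r ^ 2)⌋ ⌊r ^ 2⌋ a b c _ hR))
  rw [← hB] at hmain
  rw [Finset.card_image_of_injective B nf_injective]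
  have hBc : B.card = (Finset.Ioc ⌊-r⌋ ⌊r⌋).card *
      ((Finset.Ioc ⌊-r⌋ ⌊r⌋).card * (Finset.Ioc ⌊-(r ^ 2)⌋ ⌊r ^ 2⌋).card) := by
    rw [hB, box, Finset.card_product, Finset.card_product]
  have hI := card_Ioc_floor_ge r
  have hJ := card_Ioc_floor_ge (r ^ 2)
  have hfl : (⌊r⌋₊ : ℝ) ≤ r := Nat.floor_le (by linarith)
  rw [hBc]
  have hmain' := (Nat.cast_le (α := ℝ)).2 hmain
  push_cast at hmain' ⊢
  generalize ((Finset.Ioc ⌊-r⌋ ⌊r⌋).card : ℝ) = I at *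
  generalize ((Finset.Ioc ⌊-(r ^ 2)⌋ ⌊r ^ 2⌋).card : ℝ) = J at *
  generalize (⌊r⌋₊ : ℝ) = R at *
  rw [Nat.cast_natAbs, Nat.cast_natAbs, Nat.cast_natAbs, Int.cast_abs, Int.cast_abs,
    Int.cast_abs] at *
  have ha := abs_nonneg (a : ℝ)
  have hb := abs_nonneg (b : ℝ)
  have hc := abs_nonneg (c : ℝ)
  generalize |(a : ℝ)| = α at *
  generalize |(b : ℝ)| = β at *
  generalize |(c : ℝ)| = γ at *
  have hIr : r ≤ I := by linarith
  have hJr : r * r ≤ J := by nlinarith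
  have hI0 : 0 < I := by linarith
  have hJ0 : 0 < J := by nlinarith
  have hr0 : 0 < r := by linarith
  rw [div_le_div_iff₀ (by positivity) hr0]
  refine (mul_le_mul_of_nonneg_right hmain' hr0.le).trans ?_
  -- Each coordinate has its own scale: `r ≤ I` absorbs the horizontal translation, and
  -- `r * r ≤ J` absorbs the shear, whose size is only of order `r`.
  have e1 : (α + β) * (I * J) * r ≤ (α + β) * (I * J) * I := by gcongr
  have e2 : (γ + α * R) * (I * I) * r ≤ (γ + α) * (I * I) * J := by
    have h1 : (γ + α * R) * r ≤ (γ + α) * J := by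
      calc (γ + α * R) * r ≤ (γ * r + α * r) * r := by
            gcongr
            exact le_mul_of_one_le_right hc hr
        _ = (γ + α) * (r * r) := by ring
        _ ≤ (γ + α) * J := by gcongr
    calc (γ + α * R) * (I * I) * r = (γ + α * R) * r * (I * I) := by ring
      _ ≤ (γ + α) * J * (I * I) := by gcongr
      _ = _ := by ring
  linarith


/-- The sets `F_n = {s^k t^l u^m : −√(n/2) < k, l ≤ √(n/2), −n/2 < m ≤ n/2}` form a Følner
sequence for the integer Heisenberg group. -/
theorem heisenberg_folner
    (F : ℕ → Finset Heisenberg)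
    (hF : ∀ n : ℕ, (F n : Set Heisenberg) = {g : Heisenberg | ∃ k l m : ℤ,
      (-Real.sqrt ((n : ℝ) / 2) < (k : ℝ) ∧ (k : ℝ) ≤ Real.sqrt ((n : ℝ) / 2)) ∧
      (-Real.sqrt ((n : ℝ) / 2) < (l : ℝ) ∧ (l : ℝ) ≤ Real.sqrt ((n : ℝ) / 2)) ∧
      (-(n : ℚ) / 2 < (m : ℚ) ∧ (m : ℚ) ≤ (n : ℚ) / 2) ∧
      g = Heisenberg.s ^ k * Heisenberg.t ^ l * Heisenberg.u ^ m}) :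
    (∀ n : ℕ, 1 ≤ n → (F n).Nonempty) ∧
    (∀ g : Heisenberg, ∀ᶠ n in atTop, g ∈ F n) ∧
    (∀ g : Heisenberg, Tendsto
      (fun n => ((((F n) ∆ ((F n).image (· * g))).card : ℝ) / ((F n).card : ℝ)))
      atTop (nhds 0)) := by
  have hr2 : ∀ n : ℕ, Real.sqrt ((n : ℝ) / 2) ^ 2 = (n : ℝ) / 2 := fun n =>
    Real.sq_sqrt (by positivity)
  have hrt : Tendsto (fun n : ℕ => Real.sqrt ((n : ℝ) / 2)) atTop atTop :=
    Real.tendsto_sqrt_atTop.comp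
      (tendsto_natCast_atTop_atTop.atTop_div_const (by norm_num))
  have hht : Tendsto (fun n : ℕ => (n : ℚ) / 2) atTop atTop :=
    tendsto_natCast_atTop_atTop.atTop_div_const (by norm_num)
  refine ⟨fun n hn => ?_, fun g => ?_, fun g => ?_⟩
  · have hpos : 0 < Real.sqrt ((n : ℝ) / 2) :=
      Real.sqrt_pos.2 (by have : (1 : ℝ) ≤ n := by exact_mod_cast hn
                          linarith)
    have hq : (1 : ℚ) ≤ n := by exact_mod_cast hn
    refine ⟨1, ?_⟩
    rw [← Finset.mem_coe, hF]
    refine ⟨0, 0, 0, ?_, ?_, ?_, by simp⟩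
    · exact ⟨by rw [Int.cast_zero]; linarith, by rw [Int.cast_zero]; exact hpos.le⟩
    · exact ⟨by rw [Int.cast_zero]; linarith, by rw [Int.cast_zero]; exact hpos.le⟩
    · constructor <;> push_cast <;> linarith
  · obtain ⟨⟨k, l, m⟩, rfl⟩ := Heisenberg.nf_surjective g
    filter_upwards [hrt.eventually_gt_atTop |(k : ℝ)|, hrt.eventually_gt_atTop |(l : ℝ)|,
      hht.eventually_gt_atTop |(m : ℚ)|] with n h1 h2 h3
    rw [← Finset.mem_coe, hF]
    rw [abs_lt] at h1 h2 h3
    exact ⟨k, l, m, ⟨h1.1, h1.2.le⟩, ⟨h2.1, h2.2.le⟩,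
      ⟨by rw [neg_div]; exact h3.1, h3.2.le⟩, rfl⟩
  · obtain ⟨⟨a, b, c⟩, rfl⟩ := Heisenberg.nf_surjective g
    have hFbox : ∀ n, F n = (Heisenberg.box ⌊-Real.sqrt ((n : ℝ) / 2)⌋ ⌊Real.sqrt ((n : ℝ) / 2)⌋
        ⌊-(Real.sqrt ((n : ℝ) / 2) ^ 2)⌋ ⌊Real.sqrt ((n : ℝ) / 2) ^ 2⌋).image Heisenberg.nf := by
      intro n
      -- The third coordinate is bounded by rationals; `n / 2 = r ^ 2` turns this into real bounds.
      have hm : ∀ m : ℤ, (-(n : ℚ) / 2 < (m : ℚ) ∧ (m : ℚ) ≤ (n : ℚ) / 2) ↔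
          (-((n : ℝ) / 2) < (m : ℝ) ∧ (m : ℝ) ≤ (n : ℝ) / 2) := by
        intro m
        rw [← neg_div, ← Rat.cast_lt (K := ℝ), ← Rat.cast_le (K := ℝ)]
        push_cast
        rfl
      ext g
      rw [← Finset.mem_coe, hF, hr2]
      simp only [Set.mem_ofPred_eq, Finset.mem_image, Heisenberg.box, Finset.mem_product,
        Finset.mem_Ioc, Int.floor_lt, Int.le_floor, Prod.exists, hm]
      constructor
      · rintro ⟨k, l, m, hk, hl, hm, rfl⟩
        exact ⟨k, l, m, ⟨hk, hl, hm⟩, rfl⟩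
      · rintro ⟨k, l, m, ⟨hk, hl, hm⟩, rfl⟩
        exact ⟨k, l, m, hk, hl, hm, rfl⟩
    refine squeeze_zero' (Eventually.of_forall fun n => by positivity) ?_
      (hrt.const_div_atTop (4 * (2 * a.natAbs + b.natAbs + c.natAbs) : ℝ))
    filter_upwards [hrt.eventually_ge_atTop 1] with n hn
    rw [hFbox]
    exact ratio_le _ hn a b c _ rfl
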